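/- Let 𝒦 = {K_n : n ∈ ω} be a countably infinite set of compact subsets of (0,1), no two of which are order isomorphic. Then every 𝒦-fan is endpoint rigid. -/

import Mathlib

/-!
Since the Cantor set contains no interval, a connected subset of the fan missing the vertex `p`
lies on one ray (`slope_eq`), and a continuum containing `p` contains the segment from `p` to each
of its points (`leg_subset`). Hence only `p` can be the common point of three otherwise disjoint
non-degenerate continua (`eq_vertex_of_three`). The endpoints `e n` are distinct because their
traces are pairwise not order isomorphic, so three of their legs show that every
self-homeomorphism `h` fixes `p`. It follows that `h` maps legs onto legs preserving the order
(`IsSmoothFan.map_leg`); as it also preserves the set of endpoints and its closure, it carries the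
trace on the leg of an endpoint `x` to an order isomorphic trace on the leg of `h x`
(`legTrace_map`). The defining property of a `𝒦`-fan then forces `h (e n) = e n` for all `n`.
By continuity `h` fixes the closure of the `e n` pointwise. The leg of any other endpoint `x` meets
that closure off the vertex, so `x` and `h x` lie on the same ray; an endpoint is the top of its
leg (`IsSmoothFan.endpoint_eq`), so `h x = x`.
-/

open Set Topology

noncomputable section

namespace SmoothFanPaper

/-- `A` is an arc (a homeomorphic copy of `[0,1]`) with endpoints `a` and `b`. -/
def IsArc {α : Type*} [TopologicalSpace α] (A : Set α) (a b : α) : Prop :=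
  ∃ h : (Set.Icc (0:ℝ) 1) ≃ₜ A,
    (h ⟨0, Set.left_mem_Icc.mpr zero_le_one⟩ : α) = a ∧
    (h ⟨1, Set.right_mem_Icc.mpr zero_le_one⟩ : α) = b

/-- The order of `x` in `X` is at least `n`: there are `n` arcs contained in `X`, each with
`x` as an endpoint, which pairwise meet only in `x`. -/
def OrderAtLeast {α : Type*} [TopologicalSpace α] (X : Set α) (x : α) (n : ℕ) : Prop :=
  ∃ A : Fin n → Set α, (∀ i, A i ⊆ X) ∧ (∀ i, ∃ b, IsArc (A i) x b) ∧
    ∀ i j, i ≠ j → A i ∩ A j = {x}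

/-- The set of endpoints of `X`: points of order exactly `1`. -/
def Endpoints {α : Type*} [TopologicalSpace α] (X : Set α) : Set α :=
  {x | x ∈ X ∧ OrderAtLeast X x 1 ∧ ¬ OrderAtLeast X x 2}

/-- The Cantor fan: the union of all straight-line segments from the origin to the points of
`cantorSet × {1}` in the plane. -/
def CantorFan : Set (ℝ × ℝ) :=
  {q | ∃ c ∈ cantorSet, ∃ t ∈ Set.Icc (0:ℝ) 1, q = (t * c, t)}

/-- The cone point of the Cantor fan. -/
def fanVertex : ℝ × ℝ := (0, 0)

/-- A smooth fan: a non-degenerate subcontinuum of the Cantor fan containing the cone point,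
whose cone point (the vertex) has order at least 2.  (Every statement below about smooth fans
is invariant under homeomorphisms, so we may realize all smooth fans concretely as such
subcontinua.) -/
structure IsSmoothFan (X : Set (ℝ × ℝ)) : Prop where
  subset_fan : X ⊆ CantorFan
  isCompact : IsCompact X
  isConnected : IsConnected X
  nondegenerate : ∃ x ∈ X, ∃ y ∈ X, x ≠ y
  vertex_mem : fanVertex ∈ X
  vertex_order : OrderAtLeast X fanVertex 2

/-- Two subsets of `(0,1)` are order isomorphic if some order preserving self-homeomorphism
of `[0,1]` maps one onto the other. -/
def OrderIsomorphic (A B : Set ℝ) : Prop :=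
  ∃ h : (Set.Icc (0:ℝ) 1) ≃ₜ (Set.Icc (0:ℝ) 1), StrictMono h ∧
    Subtype.val '' (⇑h '' (Subtype.val ⁻¹' A)) = B

/-- The canonical parametrization of (subsets of) the leg of the Cantor fan through `e`:
a point of the leg is sent to its height, rescaled so that `e` is at height `1`. -/
def legParam (e : ℝ × ℝ) (S : Set (ℝ × ℝ)) : Set ℝ :=
  (fun q : ℝ × ℝ => q.2 / e.2) '' S

/-- The trace of the closure of a set `T` on the open leg `pe ∖ {p, e}` (where `p` is the
vertex and `pe = segment ℝ p e` is the unique arc in a smooth fan from `p` to an endpoint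
`e`), viewed as a subset of `(0,1)` via the canonical parametrization of the leg. -/
def legTrace (T : Set (ℝ × ℝ)) (e : ℝ × ℝ) : Set ℝ :=
  legParam e ((closure T ∩ segment ℝ fanVertex e) \ {fanVertex, e})

/-- `K` enumerates a countably infinite set `𝒦` of compact subsets of `(0,1)`, no two of
which are order isomorphic. -/
def KFamily (K : ℕ → Set ℝ) : Prop :=
  (∀ n, IsCompact (K n) ∧ K n ⊆ Set.Ioo (0:ℝ) 1) ∧
    ∀ m n, m ≠ n → ¬ OrderIsomorphic (K m) (K n)

/-- `X` is a `𝒦`-fan with witnessing endpoint set `E_𝒦 = {e n : n ∈ ℕ}`. -/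
structure IsKFan (K : ℕ → Set ℝ) (X : Set (ℝ × ℝ)) (e : ℕ → ℝ × ℝ) : Prop where
  fan : IsSmoothFan X
  mem_endpoints : ∀ n, e n ∈ Endpoints X
  trace_iso : ∀ n, OrderIsomorphic (legTrace (Endpoints X) (e n)) (K n)
  trace_not_iso : ∀ x ∈ Endpoints X \ Set.range e, ∀ n,
    ¬ OrderIsomorphic (legTrace (Endpoints X) x) (K n)
  meets_closure : ∀ x ∈ Endpoints X \ Set.range e,
    ((closure (Set.range e) ∩ segment ℝ fanVertex x) \ {fanVertex}).Nonempty

/-- A smooth fan is endpoint rigid if every self-homeomorphism fixes every endpoint. -/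
def EndpointRigid (X : Set (ℝ × ℝ)) : Prop :=
  ∀ h : X ≃ₜ X, ∀ x : X, (x : ℝ × ℝ) ∈ Endpoints X → ((h x : X) : ℝ × ℝ) = (x : ℝ × ℝ)

/-- Complete Erdős space `𝔈_c`: the points of the Hilbert space `ℓ²` all of whose
coordinates lie in `{0} ∪ {1/m : m ≥ 1}`. -/
def ErdosSpace : Set (lp (fun _ : ℕ => ℝ) 2) :=
  {x | ∀ n : ℕ, x n = 0 ∨ ∃ m : ℕ, 0 < m ∧ x n = 1 / m}

/-- `z` is a point of zero-dimensionality of the space it lives in: it has a neighborhood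
basis of clopen subsets. -/
def ZeroDimPointAt {α : Type*} [TopologicalSpace α] (z : α) : Prop :=
  ∀ U ∈ nhds z, ∃ V : Set α, IsClopen V ∧ z ∈ V ∧ V ⊆ U
/-- `L₀^φ = {(x,y) : x ∈ C, 0 ≤ y ≤ φ(x)}`, over the Cantor set. -/
def L0 (φ : ℝ → ℝ) : Set (ℝ × ℝ) :=
  {q | q.1 ∈ cantorSet ∧ 0 ≤ q.2 ∧ q.2 ≤ φ q.1}

/-- `G₀^φ = {(x,φ(x)) : x ∈ C, φ(x) > 0}`, over the Cantor set. -/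
def G0 (φ : ℝ → ℝ) : Set (ℝ × ℝ) :=
  {q | q.1 ∈ cantorSet ∧ 0 < q.2 ∧ q.2 = φ q.1}

/-- The setoid on `L₀^φ` identifying the set `C × {0}` to a point. -/
def L0Setoid (φ : ℝ → ℝ) : Setoid (L0 φ) where
  r a b := a = b ∨ ((a : ℝ × ℝ).2 = 0 ∧ (b : ℝ × ℝ).2 = 0)
  iseqv := by
    constructor
    · exact fun _ => Or.inl rfl
    · rintro a b (rfl | ⟨h1, h2⟩)
      · exact Or.inl rfl
      · exact Or.inr ⟨h2, h1⟩
    · rintro a b c (rfl | ⟨h1, h2⟩) (rfl | ⟨h3, h4⟩)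
      · exact Or.inl rfl
      · exact Or.inr ⟨h3, h4⟩
      · exact Or.inr ⟨h1, h2⟩
      · exact Or.inr ⟨h1, h4⟩

/-- The quotient space `L₀^φ / (C × {0})`. -/
def L0Quot (φ : ℝ → ℝ) : Type := Quotient (L0Setoid φ)

instance (φ : ℝ → ℝ) : TopologicalSpace (L0Quot φ) :=
  inferInstanceAs (TopologicalSpace (Quotient (L0Setoid φ)))

/-- The quotient projection `L₀^φ → L₀^φ / (C × {0})`. -/
def L0Proj (φ : ℝ → ℝ) : L0 φ → L0Quot φ := Quotient.mk (L0Setoid φ)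

/-- The setoid on `E × [0,1]` identifying `E × {0}` to a point. -/
def coneSetoid (E : Type*) : Setoid (E × Set.Icc (0:ℝ) 1) where
  r a b := a = b ∨ ((a.2 : ℝ) = 0 ∧ (b.2 : ℝ) = 0)
  iseqv := by
    constructor
    · exact fun _ => Or.inl rfl
    · rintro a b (rfl | ⟨h1, h2⟩)
      · exact Or.inl rfl
      · exact Or.inr ⟨h2, h1⟩
    · rintro a b c (rfl | ⟨h1, h2⟩) (rfl | ⟨h3, h4⟩)
      · exact Or.inl rfl
      · exact Or.inr ⟨h3, h4⟩
      · exact Or.inr ⟨h1, h2⟩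
      · exact Or.inr ⟨h1, h4⟩

/-- The cone over a space `E`: the quotient `(E × [0,1]) / (E × {0})`. -/
def Cone (E : Type*) [TopologicalSpace E] : Type _ := Quotient (coneSetoid E)

instance (E : Type*) [TopologicalSpace E] : TopologicalSpace (Cone E) :=
  inferInstanceAs (TopologicalSpace (Quotient (coneSetoid E)))

/-- A point of the one-point compactification of the disjoint union of the fans `X i`
is to be glued iff it is `∞` or the vertex of one of the fans. -/
def isGluedPoint {ι : Type*} (X : ι → Set (ℝ × ℝ)) :
    OnePoint (Σ i : ι, X i) → Prop :=
  fun a => a.elim True (fun q => (q.2 : ℝ × ℝ) = fanVertex)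

/-- The setoid gluing the vertices (and the point at infinity) of the fans `X i`. -/
def fanSumSetoid {ι : Type*} (X : ι → Set (ℝ × ℝ)) :
    Setoid (OnePoint (Σ i : ι, X i)) where
  r a b := a = b ∨ (isGluedPoint X a ∧ isGluedPoint X b)
  iseqv := by
    constructor
    · exact fun _ => Or.inl rfl
    · rintro a b (rfl | ⟨h1, h2⟩)
      · exact Or.inl rfl
      · exact Or.inr ⟨h2, h1⟩
    · rintro a b c (rfl | ⟨h1, h2⟩) (rfl | ⟨h3, h4⟩)
      · exact Or.inl rfl
      · exact Or.inr ⟨h3, h4⟩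
      · exact Or.inr ⟨h1, h2⟩
      · exact Or.inr ⟨h1, h4⟩

/-- The sum `Σᵢ Xᵢ` of a (finite or countably infinite) family of smooth fans: the quotient of
the one-point compactification of their disjoint union identifying the set consisting of all
the vertices and the point at infinity to a single point.  (For a finite family, `∞` is an
isolated point which is absorbed by the vertex class, so this agrees with the quotient of the
plain disjoint union identifying the vertices.) -/
def FanSum {ι : Type*} (X : ι → Set (ℝ × ℝ)) : Type _ := Quotient (fanSumSetoid X)

instance {ι : Type*} (X : ι → Set (ℝ × ℝ)) : TopologicalSpace (FanSum X) :=
  inferInstanceAs (TopologicalSpace (Quotient (fanSumSetoid X)))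

/-! ### Geometry of the Cantor fan -/

lemma exists_notMem_cantorSet {a b : ℝ} (hab : a < b) : ∃ u ∈ Ioo a b, u ∉ cantorSet := by
  by_contra! H
  have : TotallyDisconnectedSpace cantorSet :=
    cantorSetHomeomorphNatToBool.symm.totallyDisconnectedSpace
  have hs := (totallyDisconnectedSpace_subtype_iff.mp this) (Ioo a b) H isPreconnected_Ioo
  have h1 : a + (b - a) / 3 ∈ Ioo a b := ⟨by linarith, by linarith⟩
  have h2 : a + (b - a) / 2 ∈ Ioo a b := ⟨by linarith, by linarith⟩
  have := hs h1 h2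
  linarith

lemma CantorFan.snd_pos {q : ℝ × ℝ} (hq : q ∈ CantorFan) (h0 : q ≠ 0) : 0 < q.2 := by
  obtain ⟨c, -, t, ht, rfl⟩ := hq
  rcases ht.1.eq_or_lt with h | h
  · exact absurd (by simp [← h]) h0
  · exact h

lemma CantorFan.slope_mem {q : ℝ × ℝ} (hq : q ∈ CantorFan) (h0 : 0 < q.2) :
    q.1 / q.2 ∈ cantorSet := by
  obtain ⟨c, hc, t, ht, rfl⟩ := hq
  have : t ≠ 0 := h0.ne'
  simpa [this] using hc

/-- The slope `q.1 / q.2` maps a connected subset of the punctured fan onto an interval inside the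
Cantor set, so such a subset lies on a single ray. -/
lemma slope_eq {A : Set (ℝ × ℝ)} (hA : A ⊆ CantorFan) (hp : IsPreconnected A) (h0 : 0 ∉ A)
    {a b : ℝ × ℝ} (ha : a ∈ A) (hb : b ∈ A) : a.1 / a.2 = b.1 / b.2 := by
  have hpos : ∀ q ∈ A, 0 < q.2 := fun q hq =>
    CantorFan.snd_pos (hA hq) (fun h => h0 (h ▸ hq))
  have hI : (( fun q : ℝ × ℝ => q.1 / q.2) '' A).OrdConnected :=
    (hp.image _ (ContinuousOn.div (by fun_prop) (by fun_prop)
      fun q hq => (hpos q hq).ne')).ordConnected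
  have key : ∀ a ∈ A, ∀ b ∈ A, ¬ a.1 / a.2 < b.1 / b.2 := by
    intro a ha b hb hlt
    obtain ⟨u, hu, hu'⟩ := exists_notMem_cantorSet hlt
    obtain ⟨q, hq, rfl⟩ := hI.out (mem_image_of_mem _ ha) (mem_image_of_mem _ hb)
      (Ioo_subset_Icc_self hu)
    exact hu' (CantorFan.slope_mem (hA hq) (hpos q hq))
  exact le_antisymm (not_lt.mp (key b hb a ha)) (not_lt.mp (key a ha b hb))

lemma eq_smul_of_slope_eq {a b : ℝ × ℝ} (ha : 0 < a.2) (hb : 0 < b.2)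
    (h : a.1 / a.2 = b.1 / b.2) : a = (a.2 / b.2) • b := by
  rw [div_eq_div_iff ha.ne' hb.ne'] at h
  ext
  · simp only [Prod.smul_fst, smul_eq_mul]
    field_simp
    linarith
  · simp only [Prod.smul_snd, smul_eq_mul]
    field_simp

lemma mem_leg_iff {z w : ℝ × ℝ} :
    w ∈ segment ℝ fanVertex z ↔ ∃ t ∈ Icc (0 : ℝ) 1, w = t • z := by
  have : fanVertex = 0 := rfl
  rw [this, segment_eq_image']
  simp [eq_comm]

lemma isCompact_leg (z : ℝ × ℝ) : IsCompact (segment ℝ fanVertex z) := by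
  rw [segment_eq_image']
  exact isCompact_Icc.image (by fun_prop)

lemma isPreconnected_leg (z : ℝ × ℝ) : IsPreconnected (segment ℝ fanVertex z) :=
  (convex_segment _ _).isPreconnected

/-- A subcontinuum of the Cantor fan containing the vertex is star-shaped about it.  If a point
`s • q` below `q ∈ A` were missing, then so would be all points of the same height with nearby
slopes; cutting at that height and along two rays with slopes outside the Cantor set would
disconnect `A`. -/
lemma leg_subset {A : Set (ℝ × ℝ)} (hA : A ⊆ CantorFan) (hc : IsClosed A)
    (hp : IsPreconnected A) (h0 : fanVertex ∈ A) {q : ℝ × ℝ} (hq : q ∈ A) :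
    segment ℝ fanVertex q ⊆ A := by
  intro w hw
  obtain ⟨t, ht, rfl⟩ := mem_leg_iff.mp hw
  by_contra hn
  have hq0 : q ≠ 0 := by
    rintro rfl
    rw [smul_zero] at hn
    exact hn h0
  have hq2 := CantorFan.snd_pos (hA hq) hq0
  have ht0 : 0 < t := by
    refine lt_of_le_of_ne ht.1 ?_
    rintro rfl
    rw [zero_smul] at hn
    exact hn h0
  have ht1 : t < 1 := by
    refine lt_of_le_of_ne ht.2 ?_
    rintro rfl
    rw [one_smul] at hn
    exact hn hq
  set s : ℝ := t * q.2 with hs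
  have hs0 : 0 < s := mul_pos ht0 hq2
  have hsq : s < q.2 := by nlinarith
  set c : ℝ := q.1 / q.2 with hcdef
  have hU : {c' : ℝ | (s * c', s) ∈ Aᶜ} ∈ 𝓝 c := by
    refine (hc.isOpen_compl.preimage (f := fun c' : ℝ => (s * c', s))
      (by fun_prop)).mem_nhds ?_
    have : (s * c, s) = t • q := by
      ext
      · simp only [hs, hcdef, Prod.smul_fst, smul_eq_mul]
        field_simp
      · simp [hs]
    rw [mem_preimage, this]
    exact hn
  obtain ⟨l, r, hlr, hsub⟩ := mem_nhds_iff_exists_Ioo_subset.mp hU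
  obtain ⟨u, hu, huC⟩ := exists_notMem_cantorSet hlr.1
  obtain ⟨v, hv, hvC⟩ := exists_notMem_cantorSet hlr.2
  let B : Set (ℝ × ℝ) := {a | s < a.2 ∧ u * a.2 < a.1 ∧ a.1 < v * a.2}
  let B' : Set (ℝ × ℝ) := {a | a.2 < s} ∪ ({a | a.1 < u * a.2} ∪ {a | v * a.2 < a.1})
  have hBo : IsOpen B :=
    (isOpen_lt (f := fun _ : ℝ × ℝ => s) (g := fun a => a.2) (by fun_prop) (by fun_prop)).inter
    ((isOpen_lt (f := fun a : ℝ × ℝ => u * a.2) (g := fun a => a.1)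
      (by fun_prop) (by fun_prop)).inter
    (isOpen_lt (f := fun a : ℝ × ℝ => a.1) (g := fun a => v * a.2) (by fun_prop) (by fun_prop)))
  have hBo' : IsOpen B' := (isOpen_lt (by fun_prop) (by fun_prop)).union
    ((isOpen_lt (by fun_prop) (by fun_prop)).union (isOpen_lt (by fun_prop) (by fun_prop)))
  have hcov : A ⊆ B ∪ B' := by
    intro a ha
    by_contra hab
    simp only [B, B', mem_union, mem_ofPred_eq, not_or, not_lt, not_and] at hab
    obtain ⟨h1, h2, h3, h4⟩ := hab
    have ha2 : 0 < a.2 := hs0.trans_le h2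
    have hC := CantorFan.slope_mem (hA ha) ha2
    have e1 : u < a.1 / a.2 := by
      refine lt_of_le_of_ne ((le_div_iff₀ ha2).mpr h3) ?_
      intro h; exact huC (h ▸ hC)
    have e2 : a.1 / a.2 < v := by
      refine lt_of_le_of_ne ((div_le_iff₀ ha2).mpr h4) ?_
      intro h; exact hvC (h ▸ hC)
    rcases h2.eq_or_lt with h | h
    · have : a.1 / a.2 ∈ Ioo l r := ⟨hu.1.trans e1, e2.trans hv.2⟩
      apply hsub this
      have : (s * (a.1 / a.2), s) = a := by
        ext
        · simp only [h]
          field_simp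
        · exact h
      rw [this]
      exact ha
    · exact absurd (h1 h ((lt_div_iff₀ ha2).mp e1)) (not_le.mpr ((div_lt_iff₀ ha2).mp e2))
  obtain ⟨a, -, haB, haB'⟩ := hp B B' hBo hBo' hcov
    ⟨q, hq, hsq, (lt_div_iff₀ hq2).mp hu.2, (div_lt_iff₀ hq2).mp hv.1⟩
    ⟨fanVertex, h0, Or.inl hs0⟩
  obtain ⟨b1, b2, b3⟩ := haB
  rcases haB' with h | h | h
  · exact lt_asymm b1 h
  · exact lt_asymm b2 h
  · exact lt_asymm b3 h

lemma smul_mem_of_between {A : Set (ℝ × ℝ)} (hA : A ⊆ CantorFan) (hp : IsPreconnected A)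
    (h0 : 0 ∉ A) {q b : ℝ × ℝ} (hq : q ∈ A) (hb : b ∈ A) {s : ℝ}
    (hs : s * q.2 ∈ uIcc q.2 b.2) : s • q ∈ A := by
  have hpos : ∀ q ∈ A, 0 < q.2 := fun q hq =>
    CantorFan.snd_pos (hA hq) (fun h => h0 (h ▸ hq))
  have hI : (Prod.snd '' A).OrdConnected := (hp.image _ (by fun_prop)).ordConnected
  obtain ⟨a, ha, has⟩ := hI.uIcc_subset (mem_image_of_mem _ hq) (mem_image_of_mem _ hb) hs
  have := eq_smul_of_slope_eq (hpos a ha) (hpos q hq) (slope_eq hA hp h0 ha hq)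
  rw [has, mul_div_cancel_right₀ _ (hpos q hq).ne'] at this
  exact this ▸ ha

/-- A non-degenerate subcontinuum of the fan through `q ≠ 0` contains a non-degenerate piece of
the ray of `q`, just below or just above `q`. -/
lemma exists_side {A : Set (ℝ × ℝ)} (hA : A ⊆ CantorFan) (hc : IsClosed A)
    (hp : IsPreconnected A) {q b : ℝ × ℝ} (hq : q ∈ A) (hq0 : q ≠ 0) (hb : b ∈ A)
    (hbq : b ≠ q) :
    (∃ r < (1 : ℝ), ∀ s ∈ Icc r 1, s • q ∈ A) ∨ (∃ r > (1 : ℝ), ∀ s ∈ Icc 1 r, s • q ∈ A) := by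
  by_cases h0 : (0 : ℝ × ℝ) ∈ A
  · exact Or.inl ⟨0, one_pos, fun s hs => leg_subset hA hc hp h0 hq (mem_leg_iff.mpr ⟨s, hs, rfl⟩)⟩
  have hq2 := CantorFan.snd_pos (hA hq) hq0
  have hb2 := CantorFan.snd_pos (hA hb) (fun h => h0 (h ▸ hb))
  have hbe := eq_smul_of_slope_eq hb2 hq2 (slope_eq hA hp h0 hb hq)
  rcases lt_trichotomy (b.2 / q.2) 1 with h | h | h
  · refine Or.inl ⟨_, h, fun s hs => smul_mem_of_between hA hp h0 hq hb ?_⟩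
    rw [mem_uIcc]
    exact Or.inr ⟨(div_le_iff₀ hq2).mp hs.1, by nlinarith [hs.2]⟩
  · rw [h, one_smul] at hbe
    exact absurd hbe hbq
  · refine Or.inr ⟨_, h, fun s hs => smul_mem_of_between hA hp h0 hq hb ?_⟩
    rw [mem_uIcc]
    exact Or.inl ⟨by nlinarith [hs.1], (le_div_iff₀ hq2).mp hs.2⟩

/-- Only the vertex can be the common point of three non-degenerate continua meeting pairwise in
that point alone: at any other point two of them leave along the ray in the same direction. -/
lemma eq_vertex_of_three {A : Fin 3 → Set (ℝ × ℝ)} (hA : ∀ i, A i ⊆ CantorFan)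
    (hc : ∀ i, IsClosed (A i)) (hp : ∀ i, IsPreconnected (A i)) {q : ℝ × ℝ}
    (hq : ∀ i, q ∈ A i) (hne : ∀ i, ∃ b ∈ A i, b ≠ q)
    (hd : ∀ i j, i ≠ j → A i ∩ A j ⊆ {q}) : q = fanVertex := by
  by_contra hq0
  have hside := fun i => (hne i).elim fun b hb =>
    exists_side (hA i) (hc i) (hp i) (hq i) hq0 hb.1 hb.2
  have hsm : ∀ s : ℝ, s • q = q → s = 1 := by
    intro s hs
    have h2 := CantorFan.snd_pos (hA 0 (hq 0)) hq0
    have h3 : s * q.2 = q.2 := congrArg Prod.snd hs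
    exact mul_right_cancel₀ h2.ne' (h3.trans (one_mul _).symm)
  classical
  obtain ⟨i, j, hij, hf⟩ := Fintype.exists_ne_map_eq_of_card_lt
    (fun i => decide (∃ r < (1 : ℝ), ∀ s ∈ Icc r 1, s • q ∈ A i)) (by simp)
  rw [decide_eq_decide] at hf
  by_cases hi : ∃ r < (1 : ℝ), ∀ s ∈ Icc r 1, s • q ∈ A i
  · obtain ⟨r', hr', h'⟩ := hf.mp hi
    obtain ⟨r, hr, h⟩ := hi
    have hm : max r r' < 1 := max_lt hr hr'
    have := hsm _ (hd i j hij ⟨h _ ⟨le_max_left _ _, hm.le⟩, h' _ ⟨le_max_right _ _, hm.le⟩⟩)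
    exact hm.ne this
  · obtain ⟨r, hr, h⟩ := (hside i).resolve_left hi
    obtain ⟨r', hr', h'⟩ := (hside j).resolve_left (fun hj => hi (hf.mpr hj))
    have hm : 1 < min r r' := lt_min hr hr'
    have := hsm _ (hd i j hij ⟨h _ ⟨hm.le, min_le_left _ _⟩, h' _ ⟨hm.le, min_le_right _ _⟩⟩)
    exact hm.ne' this

/-! ### Arcs and endpoints -/

lemma isArc_range {f : Icc (0 : ℝ) 1 → ℝ × ℝ} (hf : Continuous f) (hi : Function.Injective f) :
    IsArc (range f) (f ⟨0, left_mem_Icc.mpr zero_le_one⟩)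
      (f ⟨1, right_mem_Icc.mpr zero_le_one⟩) :=
  ⟨(hf.isClosedEmbedding hi).isEmbedding.toHomeomorph, rfl, rfl⟩

lemma isArc_segment {x y : ℝ × ℝ} (hxy : x ≠ y) : IsArc (segment ℝ x y) x y := by
  have hi : Function.Injective (fun t : Icc (0 : ℝ) 1 => x + (t : ℝ) • (y - x)) := by
    intro s t h
    have h' : (s : ℝ) • (y - x) = (t : ℝ) • (y - x) := add_left_cancel h
    exact Subtype.ext (smul_left_injective ℝ (sub_ne_zero.mpr hxy.symm) h')
  have := isArc_range (by fun_prop) hi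
  simp only [zero_smul, add_zero, one_smul, add_sub_cancel] at this
  convert this
  rw [segment_eq_image']
  ext w
  simp

lemma orderAtLeast_map {X : Set (ℝ × ℝ)} (h : X ≃ₜ X) (x : X) {n : ℕ}
    (hx : OrderAtLeast X (x : ℝ × ℝ) n) : OrderAtLeast X (h x : ℝ × ℝ) n := by
  obtain ⟨A, hAX, hA, hAA⟩ := hx
  refine ⟨fun i => Subtype.val '' (h '' (Subtype.val ⁻¹' A i)), ?_, ?_, ?_⟩
  · rintro i _ ⟨y, -, rfl⟩
    exact y.2
  · intro i
    obtain ⟨b, g, g0, g1⟩ := hA i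
    let f : Icc (0 : ℝ) 1 → ℝ × ℝ := fun t => h ⟨g t, hAX i (g t).2⟩
    have hf : Continuous f := by fun_prop
    have hfi : Function.Injective f := by
      intro s t hst
      have h1 := h.injective (Subtype.ext hst)
      exact g.injective (Subtype.ext (Subtype.mk.inj h1))
    refine ⟨f ⟨1, right_mem_Icc.mpr zero_le_one⟩, ?_⟩
    · convert isArc_range hf hfi using 1
      · ext w
        constructor
        · rintro ⟨_, ⟨y, hy, rfl⟩, rfl⟩
          refine ⟨g.symm ⟨y, hy⟩, ?_⟩
          simp [f]
        · rintro ⟨t, rfl⟩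
          exact ⟨_, ⟨_, (g t).2, rfl⟩, rfl⟩
      · exact congrArg (fun y => (h y : ℝ × ℝ)) (Subtype.ext g0.symm)
  · intro i j hij
    rw [← image_inter Subtype.val_injective, ← image_inter h.injective, ← preimage_inter,
      hAA i j hij]
    have : Subtype.val ⁻¹' {(x : ℝ × ℝ)} = ({x} : Set X) := by
      ext y
      simp [Subtype.ext_iff]
    rw [this, image_singleton, image_singleton]

lemma endpoints_map {X : Set (ℝ × ℝ)} (h : X ≃ₜ X) (x : X)
    (hx : (x : ℝ × ℝ) ∈ Endpoints X) : (h x : ℝ × ℝ) ∈ Endpoints X := by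
  refine ⟨(h x).2, orderAtLeast_map h x hx.2.1, fun h2 => hx.2.2 ?_⟩
  simpa using orderAtLeast_map h.symm (h x) h2

lemma closure_endpoints_map {X : Set (ℝ × ℝ)} (h : X ≃ₜ X) (x : X)
    (hx : (x : ℝ × ℝ) ∈ closure (Endpoints X)) : (h x : ℝ × ℝ) ∈ closure (Endpoints X) := by
  have himg : Subtype.val '' ((Subtype.val : X → ℝ × ℝ) ⁻¹' Endpoints X) = Endpoints X := by
    rw [Subtype.image_preimage_coe]
    exact inter_eq_right.mpr fun y hy => hy.1
  have hcl : ∀ y : X, (y : ℝ × ℝ) ∈ closure (Endpoints X) ↔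
      y ∈ closure ((Subtype.val : X → ℝ × ℝ) ⁻¹' Endpoints X) := by
    intro y
    rw [closure_subtype, himg]
  rw [hcl] at hx ⊢
  exact map_mem_closure h.continuous hx fun y hy => endpoints_map h y hy

namespace IsSmoothFan

variable {X : Set (ℝ × ℝ)}

lemma leg_subset (hX : IsSmoothFan X) {q : ℝ × ℝ} (hq : q ∈ X) :
    segment ℝ fanVertex q ⊆ X :=
  SmoothFanPaper.leg_subset hX.subset_fan hX.isCompact.isClosed hX.isConnected.isPreconnected
    hX.vertex_mem hq

lemma endpoint_ne (hX : IsSmoothFan X) {q : ℝ × ℝ} (hq : q ∈ Endpoints X) : q ≠ fanVertex := by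
  rintro rfl
  exact hq.2.2 hX.vertex_order

lemma endpoint_snd_pos (hX : IsSmoothFan X) {q : ℝ × ℝ} (hq : q ∈ Endpoints X) : 0 < q.2 :=
  CantorFan.snd_pos (hX.subset_fan hq.1) (hX.endpoint_ne hq)

/-- An endpoint is the top of its leg: from a lower point of the leg one can leave both towards
the vertex and away from it. -/
lemma endpoint_eq (hX : IsSmoothFan X) {x z : ℝ × ℝ} (hx : x ∈ Endpoints X) (hz : z ∈ X)
    (hxz : x ∈ segment ℝ fanVertex z) : x = z := by
  by_contra hne
  apply hx.2.2
  obtain ⟨t, ht, hxt⟩ := mem_leg_iff.mp hxz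
  have hx0 := hX.endpoint_ne hx
  have hseg1 : segment ℝ x fanVertex ⊆ X := by
    rw [segment_symm]
    exact hX.leg_subset hx.1
  have hseg2 : segment ℝ x z ⊆ X :=
    ((convex_segment fanVertex z).segment_subset hxz (right_mem_segment ℝ _ _)).trans
      (hX.leg_subset hz)
  have hz2 : 0 < z.2 := by
    refine CantorFan.snd_pos (hX.subset_fan hz) ?_
    rintro rfl
    rw [smul_zero] at hxt
    exact hx0 hxt
  have hxz2 : x.2 ≤ z.2 := by
    rw [hxt]
    simp only [Prod.smul_snd, smul_eq_mul]
    nlinarith [ht.2]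
  have hmeet : segment ℝ x fanVertex ∩ segment ℝ x z = {x} := by
    ext w
    simp only [mem_inter_iff, mem_singleton_iff]
    constructor
    · rintro ⟨h1, h2⟩
      rw [segment_symm, mem_leg_iff] at h1
      obtain ⟨s, hs, hw⟩ := h1
      rw [segment_eq_image'] at h2
      obtain ⟨r, hr, hw'⟩ := h2
      have e1 : w.2 = s * x.2 := by rw [hw]; rfl
      have e2 : w.2 = x.2 + r * (z.2 - x.2) := by rw [← hw']; rfl
      have hx2 := hX.endpoint_snd_pos hx
      have h3 : s * x.2 = x.2 := by
        apply le_antisymm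
        · nlinarith [hs.2]
        · rw [← e1, e2]
          nlinarith [hr.1]
      have : s = 1 := mul_right_cancel₀ hx2.ne' (h3.trans (one_mul _).symm)
      rw [hw, this, one_smul]
    · rintro rfl
      exact ⟨left_mem_segment ℝ _ _, left_mem_segment ℝ _ _⟩
  refine ⟨![segment ℝ x fanVertex, segment ℝ x z], ?_, ?_, ?_⟩
  · intro i
    fin_cases i
    · exact hseg1
    · exact hseg2
  · intro i
    fin_cases i
    · exact ⟨_, isArc_segment hx0⟩
    · exact ⟨_, isArc_segment hne⟩
  · intro i j hij
    fin_cases i <;> fin_cases j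
    · exact absurd rfl hij
    · exact hmeet
    · rw [inter_comm]
      exact hmeet
    · exact absurd rfl hij

/-- Two endpoints whose legs share a point other than the vertex coincide. -/
lemma endpoint_unique (hX : IsSmoothFan X) {x z y : ℝ × ℝ} (hx : x ∈ Endpoints X)
    (hz : z ∈ Endpoints X) (hy : y ≠ fanVertex) (hyx : y ∈ segment ℝ fanVertex x)
    (hyz : y ∈ segment ℝ fanVertex z) : x = z := by
  obtain ⟨s, hs, rfl⟩ := mem_leg_iff.mp hyx
  obtain ⟨t, ht, hst⟩ := mem_leg_iff.mp hyz
  have hs0 : 0 < s := by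
    refine lt_of_le_of_ne hs.1 ?_
    rintro rfl
    exact hy (zero_smul _ _)
  have ht0 : 0 < t := by
    refine lt_of_le_of_ne ht.1 ?_
    rintro rfl
    exact hy (hst.trans (zero_smul _ _))
  rcases le_total s t with h | h
  · refine (hX.endpoint_eq hz hx.1 (mem_leg_iff.mpr ⟨s / t, ?_, ?_⟩)).symm
    · exact ⟨by positivity, (div_le_one ht0).mpr h⟩
    · rw [div_eq_inv_mul, mul_smul, hst, smul_smul, inv_mul_cancel₀ ht0.ne', one_smul]
  · refine hX.endpoint_eq hx hz.1 (mem_leg_iff.mpr ⟨t / s, ?_, ?_⟩)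
    · exact ⟨by positivity, (div_le_one hs0).mpr h⟩
    · rw [div_eq_inv_mul, mul_smul, ← hst, smul_smul, inv_mul_cancel₀ hs0.ne', one_smul]

/-! ### Self-homeomorphisms of a fan -/

lemma map_subset_compact_preconnected (h : X ≃ₜ X) {S : Set (ℝ × ℝ)} (hS : S ⊆ X)
    (hc : IsCompact S) (hp : IsPreconnected S) :
    Subtype.val '' (h '' (Subtype.val ⁻¹' S)) ⊆ X ∧
    IsCompact (Subtype.val '' (h '' (Subtype.val ⁻¹' S))) ∧
    IsPreconnected (Subtype.val '' (h '' (Subtype.val ⁻¹' S))) := by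
  have himg : Subtype.val '' ((Subtype.val : X → ℝ × ℝ) ⁻¹' S) = S := by
    rw [Subtype.image_preimage_coe]
    exact inter_eq_right.mpr hS
  have hc' : IsCompact ((Subtype.val : X → ℝ × ℝ) ⁻¹' S) := by
    rw [Subtype.isCompact_iff, himg]
    exact hc
  have hp' : IsPreconnected ((Subtype.val : X → ℝ × ℝ) ⁻¹' S) := by
    rw [← IsInducing.subtypeVal.isPreconnected_image, himg]
    exact hp
  refine ⟨?_, ?_, ?_⟩
  · rintro _ ⟨y, -, rfl⟩
    exact y.2
  · exact (hc'.image h.continuous).image continuous_subtype_val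
  · exact (hp'.image h h.continuous.continuousOn).image _ continuous_subtype_val.continuousOn

/-- With three endpoints, the vertex is topologically distinguished: it is the common point of
three legs. -/
lemma map_vertex (hX : IsSmoothFan X) {e : Fin 3 → ℝ × ℝ} (he : ∀ i, e i ∈ Endpoints X)
    (hinj : Function.Injective e) (h : X ≃ₜ X) :
    (h ⟨fanVertex, hX.vertex_mem⟩ : ℝ × ℝ) = fanVertex := by
  have hT := fun i => map_subset_compact_preconnected h (hX.leg_subset (he i).1)
    (isCompact_leg (e i)) (isPreconnected_leg (e i))
  refine eq_vertex_of_three (fun i => (hT i).1.trans hX.subset_fan)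
    (fun i => (hT i).2.1.isClosed) (fun i => (hT i).2.2) ?_ ?_ ?_
  · intro i
    exact ⟨_, ⟨_, left_mem_segment ℝ _ _, rfl⟩, rfl⟩
  · intro i
    refine ⟨_, ⟨_, ⟨⟨e i, (he i).1⟩, right_mem_segment ℝ _ _, rfl⟩, rfl⟩, fun heq => ?_⟩
    exact hX.endpoint_ne (he i) (congrArg Subtype.val (h.injective (Subtype.ext heq)))
  · rintro i j hij _ ⟨⟨_, ⟨a, ha, rfl⟩, rfl⟩, ⟨_, ⟨b, hb, rfl⟩, hab⟩⟩
    obtain rfl := h.injective (Subtype.ext hab)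
    by_cases h0 : (b : ℝ × ℝ) = fanVertex
    · have : b = ⟨fanVertex, hX.vertex_mem⟩ := Subtype.ext h0
      rw [this]
      rfl
    · exact absurd (hinj (hX.endpoint_unique (he i) (he j) h0 ha hb)) hij

/-- A homeomorphism fixing the vertex preserves the order along legs, since `h⁻¹` of the leg of
`h z` is a continuum containing the vertex and `z`. -/
lemma map_leg (hX : IsSmoothFan X) {h : X ≃ₜ X}
    (hv : (h ⟨fanVertex, hX.vertex_mem⟩ : ℝ × ℝ) = fanVertex) {w z : X}
    (hw : (w : ℝ × ℝ) ∈ segment ℝ fanVertex (z : ℝ × ℝ)) :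
    (h w : ℝ × ℝ) ∈ segment ℝ fanVertex (h z : ℝ × ℝ) := by
  obtain ⟨h1, h2, h3⟩ := map_subset_compact_preconnected h.symm (hX.leg_subset (h z).2)
    (isCompact_leg _) (isPreconnected_leg _)
  have hmem : ∀ y : X, (h y : ℝ × ℝ) ∈ segment ℝ fanVertex (h z : ℝ × ℝ) →
      (y : ℝ × ℝ) ∈ Subtype.val '' (h.symm '' (Subtype.val ⁻¹'
        segment ℝ fanVertex (h z : ℝ × ℝ))) :=
    fun y hy => ⟨y, ⟨h y, hy, h.symm_apply_apply y⟩, rfl⟩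
  have hsub := SmoothFanPaper.leg_subset (h1.trans hX.subset_fan) h2.isClosed h3
    (hmem ⟨fanVertex, hX.vertex_mem⟩ (by rw [hv]; exact left_mem_segment ℝ _ _))
    (hmem z (right_mem_segment ℝ _ _))
  obtain ⟨_, ⟨y, hy, rfl⟩, hyw⟩ := hsub hw
  have : w = h.symm y := Subtype.ext hyw.symm
  rw [this, h.apply_symm_apply]
  exact hy

lemma symm_vertex (hX : IsSmoothFan X) {h : X ≃ₜ X}
    (hv : (h ⟨fanVertex, hX.vertex_mem⟩ : ℝ × ℝ) = fanVertex) :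
    (h.symm ⟨fanVertex, hX.vertex_mem⟩ : ℝ × ℝ) = fanVertex := by
  have : h ⟨fanVertex, hX.vertex_mem⟩ = ⟨fanVertex, hX.vertex_mem⟩ := Subtype.ext hv
  rw [← this, h.symm_apply_apply]

end IsSmoothFan

/-! ### Traces on legs -/

lemma mem_legTrace {T : Set (ℝ × ℝ)} {x : ℝ × ℝ} (hx : 0 < x.2) {r : ℝ} :
    r ∈ legTrace T x ↔ r ∈ Ioo (0 : ℝ) 1 ∧ r • x ∈ closure T := by
  constructor
  · rintro ⟨q, ⟨⟨hq, hqs⟩, hne⟩, rfl⟩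
    obtain ⟨t, ht, rfl⟩ := mem_leg_iff.mp hqs
    have : (t • x).2 / x.2 = t := by
      simp only [Prod.smul_snd, smul_eq_mul]
      field_simp
    simp only [this]
    simp only [mem_insert_iff, mem_singleton_iff, not_or] at hne
    refine ⟨⟨lt_of_le_of_ne ht.1 ?_, lt_of_le_of_ne ht.2 ?_⟩, hq⟩
    · rintro rfl
      exact hne.1 (zero_smul _ _)
    · rintro rfl
      exact hne.2 (one_smul _ _)
  · rintro ⟨hr, hrT⟩
    refine ⟨r • x, ⟨⟨hrT, mem_leg_iff.mpr ⟨r, Ioo_subset_Icc_self hr, rfl⟩⟩, ?_⟩, ?_⟩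
    · simp only [mem_insert_iff, mem_singleton_iff, not_or]
      constructor
      · intro h0
        have : r * x.2 = 0 := congrArg Prod.snd h0
        exact (mul_pos hr.1 hx).ne' this
      · intro h1
        have : r * x.2 = x.2 := congrArg Prod.snd h1
        nlinarith [hr.2]
    · simp only [Prod.smul_snd, smul_eq_mul]
      field_simp

lemma OrderIsomorphic.symm {A B : Set ℝ} (hA : A ⊆ Icc 0 1) (h : OrderIsomorphic A B) :
    OrderIsomorphic B A := by
  obtain ⟨f, hf, rfl⟩ := h
  refine ⟨f.symm, ?_, ?_⟩
  · intro s t hst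
    by_contra hle
    have := hf.monotone (not_lt.mp hle)
    simp only [Homeomorph.apply_symm_apply] at this
    exact absurd hst (not_lt.mpr this)
  · rw [preimage_image_eq _ Subtype.val_injective, ← image_comp f.symm f]
    have : (f.symm ∘ f : Icc (0 : ℝ) 1 → Icc (0 : ℝ) 1) = id := by
      ext x
      simp
    rw [this, image_id, Subtype.image_preimage_coe]
    exact inter_eq_right.mpr hA

lemma OrderIsomorphic.trans {A B C : Set ℝ} (h : OrderIsomorphic A B)
    (h' : OrderIsomorphic B C) : OrderIsomorphic A C := by
  obtain ⟨f, hf, rfl⟩ := h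
  obtain ⟨g, hg, rfl⟩ := h'
  refine ⟨f.trans g, hg.comp hf, ?_⟩
  rw [preimage_image_eq _ Subtype.val_injective, ← image_comp g f]
  rfl

lemma legTrace_subset {T : Set (ℝ × ℝ)} {x : ℝ × ℝ} (hx : 0 < x.2) :
    legTrace T x ⊆ Icc 0 1 := fun _ hr => Ioo_subset_Icc_self ((mem_legTrace hx).mp hr).1

/-- The order type of the trace of the endpoint set on a leg is invariant under homeomorphisms
fixing the vertex: the height of `h (t • x)` relative to `h x` is the required reparametrization
of `[0,1]`. -/
lemma legTrace_map {X : Set (ℝ × ℝ)} (hX : IsSmoothFan X) {h : X ≃ₜ X}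
    (hv : (h ⟨fanVertex, hX.vertex_mem⟩ : ℝ × ℝ) = fanVertex) (x : X)
    (hx : (x : ℝ × ℝ) ∈ Endpoints X) :
    OrderIsomorphic (legTrace (Endpoints X) x) (legTrace (Endpoints X) (h x)) := by
  have hx2 := hX.endpoint_snd_pos hx
  have hy2 := hX.endpoint_snd_pos (endpoints_map h x hx)
  let P : Icc (0 : ℝ) 1 → X := fun t =>
    ⟨(t : ℝ) • (x : ℝ × ℝ), hX.leg_subset x.2 (mem_leg_iff.mpr ⟨t, t.2, rfl⟩)⟩
  have hPleg : ∀ t, (P t : ℝ × ℝ) ∈ segment ℝ fanVertex (x : ℝ × ℝ) :=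
    fun t => mem_leg_iff.mpr ⟨t, t.2, rfl⟩
  have hg : ∀ t, ∃ s : Icc (0 : ℝ) 1, (h (P t) : ℝ × ℝ) = (s : ℝ) • (h x : ℝ × ℝ) := by
    intro t
    obtain ⟨s, hs, hst⟩ := mem_leg_iff.mp (hX.map_leg hv (hPleg t))
    exact ⟨⟨s, hs⟩, hst⟩
  choose g hg using hg
  have hPinj : Function.Injective P := by
    intro s t hst
    have h1 : (s : ℝ) * (x : ℝ × ℝ).2 = t * (x : ℝ × ℝ).2 :=
      congrArg Prod.snd (congrArg Subtype.val hst)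
    exact Subtype.ext (mul_right_cancel₀ hx2.ne' h1)
  have hginj : Function.Injective g := by
    intro s t hst
    apply hPinj
    apply h.injective
    apply Subtype.ext
    rw [hg, hg, hst]
  have hgmono : StrictMono g := by
    refine Monotone.strictMono_of_injective ?_ hginj
    intro s t hst
    have h1 : (P s : ℝ × ℝ) ∈ segment ℝ fanVertex (P t : ℝ × ℝ) := by
      rcases t.2.1.eq_or_lt with h0 | h0
      · have : s = t := le_antisymm hst (Subtype.coe_le_coe.mp (h0 ▸ s.2.1))
        rw [this]
        exact right_mem_segment ℝ _ _
      · refine mem_leg_iff.mpr ⟨(s : ℝ) / t, ⟨div_nonneg s.2.1 h0.le, (div_le_one h0).mpr hst⟩, ?_⟩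
        change (s : ℝ) • (x : ℝ × ℝ) = ((s : ℝ) / t) • ((t : ℝ) • (x : ℝ × ℝ))
        rw [smul_smul, div_mul_cancel₀ _ h0.ne']
    obtain ⟨r, hr, hrt⟩ := mem_leg_iff.mp (hX.map_leg hv h1)
    rw [hg, hg] at hrt
    have h2 : (g s : ℝ) * (h x : ℝ × ℝ).2 = r * (g t * (h x : ℝ × ℝ).2) :=
      congrArg Prod.snd hrt
    rw [← mul_assoc] at h2
    have h3 := mul_right_cancel₀ hy2.ne' h2
    change (g s : ℝ) ≤ g t
    rw [h3]
    exact mul_le_of_le_one_left (g t).2.1 hr.2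
  have hgsurj : Function.Surjective g := by
    intro s
    have hs : (s : ℝ) • (h x : ℝ × ℝ) ∈ segment ℝ fanVertex (h x : ℝ × ℝ) :=
      mem_leg_iff.mpr ⟨s, s.2, rfl⟩
    have h1 := hX.map_leg (hX.symm_vertex hv) (w := ⟨_, hX.leg_subset (h x).2 hs⟩) (z := h x) hs
    rw [h.symm_apply_apply] at h1
    obtain ⟨t, ht, htw⟩ := mem_leg_iff.mp h1
    refine ⟨⟨t, ht⟩, ?_⟩
    have h2 : P ⟨t, ht⟩ = h.symm ⟨_, hX.leg_subset (h x).2 hs⟩ := Subtype.ext htw.symm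
    have h3 := hg ⟨t, ht⟩
    rw [h2, h.apply_symm_apply] at h3
    have h4 : (s : ℝ) * (h x : ℝ × ℝ).2 = g ⟨t, ht⟩ * (h x : ℝ × ℝ).2 :=
      congrArg Prod.snd h3
    exact Subtype.ext (mul_right_cancel₀ hy2.ne' h4).symm
  let G := hgmono.orderIsoOfSurjective g hgsurj
  have hcl : ∀ t : Icc (0 : ℝ) 1, (t : ℝ) • (x : ℝ × ℝ) ∈ closure (Endpoints X) ↔
      (g t : ℝ) • (h x : ℝ × ℝ) ∈ closure (Endpoints X) := by
    intro t
    rw [← hg]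
    refine ⟨fun H => closure_endpoints_map h (P t) H, fun H => ?_⟩
    have := closure_endpoints_map h.symm _ H
    rwa [h.symm_apply_apply] at this
  have hIoo : ∀ t : Icc (0 : ℝ) 1, (t : ℝ) ∈ Ioo (0 : ℝ) 1 ↔ (g t : ℝ) ∈ Ioo (0 : ℝ) 1 := by
    intro t
    have hb : g ⊥ = ⊥ := G.map_bot
    have ht : g ⊤ = ⊤ := G.map_top
    have e1 : (⊥ : Icc (0 : ℝ) 1) < t ↔ ⊥ < g t := by rw [← hgmono.lt_iff_lt (a := ⊥), hb]
    have e2 : t < (⊤ : Icc (0 : ℝ) 1) ↔ g t < ⊤ := by rw [← hgmono.lt_iff_lt (b := ⊤), ht]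
    exact and_congr e1 e2
  refine ⟨G.toHomeomorph, G.strictMono, ?_⟩
  ext r
  constructor
  · rintro ⟨_, ⟨t, ht, rfl⟩, rfl⟩
    obtain ⟨h1, h2⟩ := (mem_legTrace hx2).mp ht
    exact (mem_legTrace hy2).mpr ⟨(hIoo t).mp h1, (hcl t).mp h2⟩
  · intro hr
    obtain ⟨h1, h2⟩ := (mem_legTrace hy2).mp hr
    obtain ⟨t, ht⟩ := hgsurj ⟨r, Ioo_subset_Icc_self h1⟩
    have htr : (g t : ℝ) = r := congrArg Subtype.val ht
    rw [← htr] at h1 h2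
    exact ⟨_, ⟨t, (mem_legTrace hx2).mpr ⟨(hIoo t).mpr h1, (hcl t).mpr h2⟩, rfl⟩, htr⟩

/-- If `𝒦 = {K n : n ∈ ω}` is a countably infinite set of compact subsets
of `(0,1)`, no two of which are order isomorphic, then every `𝒦`-fan is endpoint rigid. -/
theorem kfan_endpointRigid (K : ℕ → Set ℝ) (hK : KFamily K)
    (X : Set (ℝ × ℝ)) (e : ℕ → ℝ × ℝ) (hX : IsKFan K X e) :
    EndpointRigid X := by
  have hF := hX.fan
  have hpos := fun n => hF.endpoint_snd_pos (hX.mem_endpoints n)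
  have hKeq : ∀ m n, OrderIsomorphic (legTrace (Endpoints X) (e m))
      (legTrace (Endpoints X) (e n)) → m = n := by
    intro m n hmn
    by_contra hne
    exact hK.2 m n hne ((((hX.trace_iso m).symm (legTrace_subset (hpos m))).trans hmn).trans
      (hX.trace_iso n))
  have hrefl : ∀ n, OrderIsomorphic (legTrace (Endpoints X) (e n))
      (legTrace (Endpoints X) (e n)) := fun n =>
    (hX.trace_iso n).trans ((hX.trace_iso n).symm (legTrace_subset (hpos n)))
  have hinj : Function.Injective e := by
    intro m n hmn
    apply hKeq
    have := hrefl m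
    rwa [hmn] at this ⊢
  intro h x hx
  have hv := hF.map_vertex (e := fun i : Fin 3 => e i) (fun i => hX.mem_endpoints i)
    (hinj.comp Fin.val_injective) h
  have hfix : ∀ n, (h ⟨e n, (hX.mem_endpoints n).1⟩ : ℝ × ℝ) = e n := by
    intro n
    have hm := endpoints_map h ⟨e n, (hX.mem_endpoints n).1⟩ (hX.mem_endpoints n)
    have htr := legTrace_map hF hv ⟨e n, (hX.mem_endpoints n).1⟩ (hX.mem_endpoints n)
    have hr : (h ⟨e n, (hX.mem_endpoints n).1⟩ : ℝ × ℝ) ∈ range e := by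
      by_contra hr
      exact hX.trace_not_iso _ ⟨hm, hr⟩ n ((htr.symm (legTrace_subset (hpos n))).trans
        (hX.trace_iso n))
    obtain ⟨m, hm'⟩ := hr
    rw [← hm'] at htr ⊢
    rw [hKeq n m htr]
  by_cases hxr : (x : ℝ × ℝ) ∈ range e
  · obtain ⟨n, hn⟩ := hxr
    have : x = ⟨e n, (hX.mem_endpoints n).1⟩ := Subtype.ext hn.symm
    rw [this]
    exact hfix n
  -- The leg of `x` carries a limit point `y` of the fixed endpoints; `h` fixes `y`, hence the leg.
  · obtain ⟨y, ⟨hyc, hyx⟩, hy0⟩ := hX.meets_closure x ⟨hx, hxr⟩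
    have hyX : y ∈ X := hF.leg_subset x.2 hyx
    have hrX : range e ⊆ X := by
      rintro _ ⟨n, rfl⟩
      exact (hX.mem_endpoints n).1
    have hyc' : (⟨y, hyX⟩ : X) ∈ closure ((Subtype.val : X → ℝ × ℝ) ⁻¹' range e) := by
      rw [closure_subtype, Subtype.image_preimage_coe, inter_eq_right.mpr hrX]
      exact hyc
    have hclosed : IsClosed {z : X | h z = z} := isClosed_eq h.continuous continuous_id
    have hyfix : h ⟨y, hyX⟩ = ⟨y, hyX⟩ := by
      refine closure_minimal ?_ hclosed hyc'
      rintro ⟨_, hz⟩ ⟨n, rfl⟩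
      exact Subtype.ext (hfix n)
    have hyhx := hF.map_leg hv (w := ⟨y, hyX⟩) (z := x) hyx
    rw [hyfix] at hyhx
    exact (hF.endpoint_unique hx (endpoints_map h x hx) hy0 hyx hyhx).symm

end SmoothFanPaper
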